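/- Capacity region of the 4-message index coding problem (1|4), (2|3,4), (3|1,2), (4|2,3). Consider the index coding problem with 4 messages and side information sets A_1 = {4}, A_2 = {3,4}, A_3 = {1,2}, A_4 = {2,3}. Its capacity region is exactly the set of tuples (R_1,R_2,R_3,R_4) of nonnegative reals satisfying R_1 + R_2 ≤ 1, R_1 + R_3 ≤ 1, R_1 + R_4 ≤ 1, and R_3 + R_4 ≤ 1. -/

import Mathlib

open Finset Filter

/-- Number of messages at rate `R` and block length `n`: `⌈2^{nR}⌉`. -/
noncomputable def msgCard (n : ℕ) (R : ℝ) : ℕ := ⌈(2 : ℝ) ^ ((n : ℝ) * R)⌉₊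

/-- A `(2^{nR_1},…,2^{nR_N}, n)` index code for the index coding problem with
side information sets `A j`. -/
structure IndexCode (N : ℕ) (A : Fin N → Finset (Fin N)) (R : Fin N → ℝ) (n : ℕ) where
  enc : (∀ j : Fin N, Fin (msgCard n (R j))) → (Fin n → Bool)
  dec : ∀ j : Fin N, (Fin n → Bool) →
    (∀ k : {k : Fin N // k ∈ A j}, Fin (msgCard n (R k.1))) → Fin (msgCard n (R j))

/-- Average probability of error of an index code (messages uniform). -/
noncomputable def IndexCode.Pe {N : ℕ} {A : Fin N → Finset (Fin N)} {R : Fin N → ℝ} {n : ℕ}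
    (C : IndexCode N A R n) : ℝ :=
  (Nat.card {m : ∀ j : Fin N, Fin (msgCard n (R j)) //
      ∃ j : Fin N, C.dec j (C.enc m) (fun k => m k.1) ≠ m j} : ℝ) /
    (Nat.card (∀ j : Fin N, Fin (msgCard n (R j))) : ℝ)

/-- A rate tuple of nonnegative reals is achievable if there is a sequence of codes
whose probability of error tends to zero. -/
def IndexAchievable (N : ℕ) (A : Fin N → Finset (Fin N)) (R : Fin N → ℝ) : Prop :=
  (∀ j, 0 ≤ R j) ∧
    ∃ C : (n : ℕ) → IndexCode N A R n, Tendsto (fun n => (C n).Pe) atTop (nhds 0)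

/-!
Outer bound: if the side information graph is acyclic on `S`, then the output together with the
messages outside `S` determines the messages in `S` one after the other, so the correctly decoded
tuples number at most `2 ^ n * ∏ k ∉ S, |M k|`. When `∑ j ∈ S, R j > 1` this is a vanishing fraction
of all tuples. The pairs `{1, 2}`, `{1, 3}`, `{1, 4}` and `{3, 4}` are acyclic.

Inner bound: zero-error codes can be concatenated, so their rates are closed under time sharing.
Here four scalar linear codes suffice: `x₁`, `x₂ + x₃`, `x₂ + x₄` and `(x₁ + x₄, x₂ + x₃ + x₄)`.
-/

section Decodability

variable {ι : Type*} {A : ι → Finset ι} {M : ι → Type*} {X : Type*}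
  {enc : (∀ j, M j) → X} {T : Set (∀ j, M j)}

/-- On the message tuples in `T`, every receiver `j` can recover its message without error from the
output of the encoder `enc` and its side information `A j`. Decoders are not mentioned: one exists
for receiver `j` exactly when the output and the side information determine message `j`. -/
def DecodableOn (A : ι → Finset ι) (enc : (∀ j, M j) → X) (T : Set (∀ j, M j)) : Prop :=
  ∀ m ∈ T, ∀ m' ∈ T, enc m = enc m' → ∀ j, (∀ k ∈ A j, m k = m' k) → m j = m' j

/-- The side information graph, with an edge between `j` and each member of `A j`, has no directed
cycle inside `S`. This is encoded by a ranking that strictly decreases along the edges in `S`. -/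
def AcyclicOn (A : ι → Finset ι) (S : Finset ι) : Prop :=
  ∃ rank : ι → ℕ, ∀ j ∈ S, ∀ k ∈ A j, k ∈ S → rank k < rank j

lemma DecodableOn.eq_of_eqOn_compl {S : Finset ι} (h : DecodableOn A enc T) (hS : AcyclicOn A S)
    {m m' : ∀ j, M j} (hm : m ∈ T) (hm' : m' ∈ T) (henc : enc m = enc m')
    (hcompl : ∀ k ∉ S, m k = m' k) : m = m' := by
  obtain ⟨rank, hrank⟩ := hS
  have eq_of_rank (r : ℕ) : ∀ j, rank j = r → m j = m' j := by
    induction r using Nat.strong_induction_on with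
    | _ r ih =>
      rintro j rfl
      by_cases hj : j ∈ S
      · refine h m hm m' hm' henc j fun k hk => ?_
        by_cases hkS : k ∈ S
        · exact ih (rank k) (hrank j hj k hk hkS) k rfl
        · exact hcompl k hkS
      · exact hcompl j hj
  exact funext fun j => eq_of_rank (rank j) j rfl

theorem DecodableOn.natCard_le [Fintype ι] [DecidableEq ι] [∀ j, Finite (M j)] [Finite X]
    {S : Finset ι} (h : DecodableOn A enc T) (hS : AcyclicOn A S) :
    Nat.card T ≤ Nat.card X * ∏ k ∈ Sᶜ, Nat.card (M k) := by
  let observe : T → X × ∀ k : ↥Sᶜ, M k := fun m => (enc m.1, fun k => m.1 k)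
  have observe_injective : Function.Injective observe := by
    rintro ⟨m, hm⟩ ⟨m', hm'⟩ heq
    obtain ⟨henc, hcompl⟩ := Prod.mk.inj heq
    exact Subtype.ext <| h.eq_of_eqOn_compl hS hm hm' henc fun k hk =>
      congrFun hcompl ⟨k, mem_compl.mpr hk⟩
  calc Nat.card T ≤ Nat.card (X × ∀ k : ↥Sᶜ, M k) :=
        Nat.card_le_card_of_injective observe observe_injective
    _ = Nat.card X * ∏ k ∈ Sᶜ, Nat.card (M k) := by
        rw [Nat.card_prod, Nat.card_pi, prod_coe_sort Sᶜ fun k => Nat.card (M k)]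

lemma DecodableOn.comp {M' : ι → Type*} {Y : Type*} (h : DecodableOn A enc T)
    (e : ∀ j, M' j ↪ M j) (f : X ↪ Y) :
    DecodableOn A (fun m : ∀ j, M' j => f (enc fun j => e j (m j)))
      ((fun m j => e j (m j)) ⁻¹' T) := fun _ hm _ hm' henc j hside =>
  (e j).injective <| h _ hm _ hm' (f.injective henc) j fun k hk => congrArg (e k) (hside k hk)

lemma DecodableOn.prod {M' : ι → Type*} {X' : Type*} {enc' : (∀ j, M' j) → X'}
    {T' : Set (∀ j, M' j)} (h : DecodableOn A enc T) (h' : DecodableOn A enc' T') :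
    DecodableOn A
      (fun m : ∀ j, M j × M' j => (enc fun j => (m j).1, enc' fun j => (m j).2))
      {m | (fun j => (m j).1) ∈ T ∧ (fun j => (m j).2) ∈ T'} := by
  intro m hm m' hm' henc j hside
  obtain ⟨henc₁, henc₂⟩ := Prod.mk.inj henc
  exact Prod.ext
    (h _ hm.1 _ hm'.1 henc₁ j fun k hk => congrArg Prod.fst (hside k hk))
    (h' _ hm.2 _ hm'.2 henc₂ j fun k hk => congrArg Prod.snd (hside k hk))

lemma DecodableOn.exists_of_card_le {M' : ι → Type*} {Y : Type*} [∀ j, Fintype (M j)]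
    [∀ j, Fintype (M' j)] [Fintype X] [Fintype Y] (h : DecodableOn A enc Set.univ)
    (hM : ∀ j, Fintype.card (M' j) ≤ Fintype.card (M j))
    (hX : Fintype.card X ≤ Fintype.card Y) :
    ∃ enc' : (∀ j, M' j) → Y, DecodableOn A enc' Set.univ := by
  have e (j : ι) : Nonempty (M' j ↪ M j) := Function.Embedding.nonempty_of_card_le (hM j)
  obtain ⟨f⟩ : Nonempty (X ↪ Y) := Function.Embedding.nonempty_of_card_le hX
  exact ⟨_, h.comp (fun j => (e j).some) f⟩

end Decodability

section ZeroErrorCodes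

variable {ι : Type*} {A : ι → Finset ι}

/-- The pairs `(r, ℓ)` for which `r j` bits of each message `j` can be conveyed without error in
`ℓ` transmitted bits. Concatenating two codes adds these pairs. -/
def zeroErrorCodes (A : ι → Finset ι) : AddSubmonoid ((ι → ℕ) × ℕ) where
  carrier := {p | ∃ enc : (∀ j, Fin (p.1 j) → Bool) → (Fin p.2 → Bool),
    DecodableOn A enc Set.univ}
  zero_mem' := ⟨fun _ _ => false, fun _ _ _ _ _ _ _ => funext fun i => i.elim0⟩
  add_mem' := by
    rintro p q ⟨enc, h⟩ ⟨enc', h'⟩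
    have hprod := h.prod h'
    simp only [Set.mem_univ, and_self, Set.ofPred_true] at hprod
    exact hprod.exists_of_card_le (by simp [pow_add]) (by simp [pow_add])

theorem mem_zeroErrorCodes_of_matrix {r : ι → ℕ} {ℓ : ℕ} [Fintype ι]
    (H : Matrix (Fin ℓ) (Σ j, Fin (r j)) (ZMod 2))
    (hH : ∀ x, H.mulVec x = 0 →
      ∀ j, (∀ k ∈ A j, ∀ i, x ⟨k, i⟩ = 0) → ∀ i, x ⟨j, i⟩ = 0) :
    (r, ℓ) ∈ zeroErrorCodes A := by
  let enc (m : ∀ j, Fin (r j) → ZMod 2) : Fin ℓ → ZMod 2 := H.mulVec fun s => m s.1 s.2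
  have enc_decodable : DecodableOn A enc Set.univ := by
    intro m _ m' _ henc j hside
    have hker : H.mulVec ((fun s => m s.1 s.2) - fun s => m' s.1 s.2) = 0 := by
      rw [Matrix.mulVec_sub, sub_eq_zero]
      exact henc
    exact funext fun i => sub_eq_zero.mp <|
      hH _ hker j (fun k hk i => sub_eq_zero.mpr (congrFun (hside k hk) i)) i
  exact enc_decodable.exists_of_card_le (by simp) (by simp)

end ZeroErrorCodes

lemma msgCard_pos (n : ℕ) (R : ℝ) : 0 < msgCard n R :=
  Nat.ceil_pos.mpr (by positivity)

lemma two_rpow_le_msgCard (n : ℕ) (R : ℝ) : (2 : ℝ) ^ ((n : ℝ) * R) ≤ msgCard n R :=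
  Nat.le_ceil _

lemma msgCard_le_two_pow {n k : ℕ} {R : ℝ} (h : n * R ≤ k) : msgCard n R ≤ 2 ^ k := by
  refine Nat.ceil_le.mpr ?_
  rw [Nat.cast_pow, Nat.cast_ofNat, ← Real.rpow_natCast]
  exact Real.rpow_le_rpow_of_exponent_le one_le_two h

section IndexCode

variable {N : ℕ} {A : Fin N → Finset (Fin N)} {R : Fin N → ℝ} {n : ℕ}

lemma IndexCode.nonempty : Nonempty (IndexCode N A R n) :=
  ⟨⟨fun _ _ => false, fun _ _ _ => ⟨0, msgCard_pos _ _⟩⟩⟩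

/-- The message tuples that every receiver of `C` decodes correctly. -/
def IndexCode.correctSet (C : IndexCode N A R n) : Set (∀ j, Fin (msgCard n (R j))) :=
  {m | ∀ j, C.dec j (C.enc m) (fun k => m k.1) = m j}

lemma IndexCode.decodableOn_correctSet (C : IndexCode N A R n) :
    DecodableOn A C.enc C.correctSet := by
  intro m hm m' hm' henc j hside
  calc m j = C.dec j (C.enc m) (fun k => m k.1) := (hm j).symm
    _ = C.dec j (C.enc m') (fun k => m' k.1) :=
        congrArg₂ (C.dec j) henc (funext fun k => hside k.1 k.2)
    _ = m' j := hm' j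

lemma IndexCode.natCard_messages_pos (n : ℕ) (R : Fin N → ℝ) :
    0 < Nat.card (∀ j, Fin (msgCard n (R j))) := by
  simp only [Nat.card_pi, Nat.card_fin]
  exact prod_pos fun j _ => msgCard_pos n (R j)

lemma IndexCode.one_sub_Pe (C : IndexCode N A R n) :
    1 - C.Pe = (Nat.card C.correctSet : ℝ) / Nat.card (∀ j, Fin (msgCard n (R j))) := by
  have herr : {m | ∃ j, C.dec j (C.enc m) (fun k => m k.1) ≠ m j} = C.correctSetᶜ := by
    ext m
    simp [IndexCode.correctSet]
  have hcard : (Nat.card C.correctSet : ℝ) +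
      Nat.card {m // ∃ j, C.dec j (C.enc m) (fun k => m k.1) ≠ m j} =
        Nat.card (∀ j, Fin (msgCard n (R j))) := by
    have := Set.ncard_add_ncard_compl C.correctSet
    rw [← herr] at this
    exact_mod_cast this
  have hpos : (0 : ℝ) < Nat.card (∀ j, Fin (msgCard n (R j))) := by
    exact_mod_cast IndexCode.natCard_messages_pos n R
  rw [IndexCode.Pe, one_sub_div hpos.ne', ← hcard, add_sub_cancel_right]

theorem IndexCode.one_sub_Pe_le (C : IndexCode N A R n) {S : Finset (Fin N)}
    (hS : AcyclicOn A S) : 1 - C.Pe ≤ (2 : ℝ) ^ ((n : ℝ) * (1 - ∑ j ∈ S, R j)) := by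
  have hcorrect :
      (Nat.card C.correctSet : ℝ) ≤ 2 ^ n * ∏ k ∈ Sᶜ, (msgCard n (R k) : ℝ) := by
    have := C.decodableOn_correctSet.natCard_le hS
    simp only [Nat.card_eq_fintype_card, Fintype.card_fun, Fintype.card_bool, Fintype.card_fin]
      at this
    exact_mod_cast this
  have hmessages : (Nat.card (∀ j, Fin (msgCard n (R j))) : ℝ) =
      (∏ j ∈ S, (msgCard n (R j) : ℝ)) * ∏ k ∈ Sᶜ, (msgCard n (R k) : ℝ) := by
    simp [prod_mul_prod_compl]
  have hcompl : 0 < ∏ k ∈ Sᶜ, (msgCard n (R k) : ℝ) :=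
    prod_pos fun k _ => Nat.cast_pos.mpr (msgCard_pos n (R k))
  have hrates : (2 : ℝ) ^ ((n : ℝ) * ∑ j ∈ S, R j) ≤ ∏ j ∈ S, (msgCard n (R j) : ℝ) := by
    rw [mul_sum, Real.rpow_sum_of_pos two_pos]
    exact prod_le_prod (fun j _ => by positivity) fun j _ => two_rpow_le_msgCard n (R j)
  calc 1 - C.Pe
      = Nat.card C.correctSet / Nat.card (∀ j, Fin (msgCard n (R j))) := C.one_sub_Pe
    _ ≤ 2 ^ n * (∏ k ∈ Sᶜ, (msgCard n (R k) : ℝ)) / Nat.card (∀ j, Fin (msgCard n (R j))) := by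
        gcongr
    _ = 2 ^ n / ∏ j ∈ S, (msgCard n (R j) : ℝ) := by
        rw [hmessages, mul_div_mul_right _ _ hcompl.ne']
    _ ≤ 2 ^ n / (2 : ℝ) ^ ((n : ℝ) * ∑ j ∈ S, R j) := by gcongr
    _ = (2 : ℝ) ^ ((n : ℝ) * (1 - ∑ j ∈ S, R j)) := by
        rw [mul_sub, mul_one, Real.rpow_sub two_pos, Real.rpow_natCast]

lemma IndexCode.exists_Pe_eq_zero
    {enc : (∀ j, Fin (msgCard n (R j))) → (Fin n → Bool)} (h : DecodableOn A enc Set.univ) :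
    ∃ C : IndexCode N A R n, C.Pe = 0 := by
  have hdec (j : Fin N) : ∃ dec : (Fin n → Bool) →
      (∀ k : {k // k ∈ A j}, Fin (msgCard n (R k.1))) → Fin (msgCard n (R j)),
      ∀ m, dec (enc m) (fun k => m k.1) = m j := by
    have : Nonempty (Fin (msgCard n (R j))) := ⟨⟨0, msgCard_pos _ _⟩⟩
    let received (m : ∀ j, Fin (msgCard n (R j))) :
        (Fin n → Bool) × ∀ k : {k // k ∈ A j}, Fin (msgCard n (R k.1)) :=
      (enc m, fun k => m k.1)
    have hfactors : (fun m => m j).FactorsThrough received := by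
      intro m m' heq
      obtain ⟨henc, hside⟩ := Prod.mk.inj heq
      exact h m trivial m' trivial henc j fun k hk => congrFun hside ⟨k, hk⟩
    obtain ⟨dec, hdec⟩ := (Function.factorsThrough_iff _).mp hfactors
    exact ⟨fun x s => dec (x, s), fun m => (congrFun hdec m).symm⟩
  choose dec hdec using hdec
  let C : IndexCode N A R n := ⟨enc, dec⟩
  have hcorrect : C.correctSet = Set.univ := Set.eq_univ_of_forall fun m j => hdec j m
  have hpos : (0 : ℝ) < Nat.card (∀ j, Fin (msgCard n (R j))) := by
    exact_mod_cast IndexCode.natCard_messages_pos n R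
  have hPe := C.one_sub_Pe
  rw [hcorrect, Nat.card_univ, div_self hpos.ne'] at hPe
  exact ⟨C, by linarith⟩

lemma IndexCode.exists_Pe_eq_zero_of_mem {p : (Fin N → ℕ) × ℕ} (hp : p ∈ zeroErrorCodes A)
    (hrate : ∀ j, n * R j ≤ p.1 j) (hlength : p.2 ≤ n) : ∃ C : IndexCode N A R n, C.Pe = 0 := by
  obtain ⟨enc, henc⟩ := hp
  obtain ⟨enc', henc'⟩ := henc.exists_of_card_le
    (M' := fun j => Fin (msgCard n (R j))) (Y := Fin n → Bool)
    (fun j => by simpa using msgCard_le_two_pow (hrate j))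
    (by simpa using Nat.pow_le_pow_right two_pos hlength)
  exact IndexCode.exists_Pe_eq_zero henc'

end IndexCode

section CapacityRegion

variable {N : ℕ} {A : Fin N → Finset (Fin N)} {R : Fin N → ℝ}

theorem IndexAchievable.sum_le_one (h : IndexAchievable N A R) {S : Finset (Fin N)}
    (hS : AcyclicOn A S) : ∑ j ∈ S, R j ≤ 1 := by
  obtain ⟨-, C, hC⟩ := h
  by_contra! hlt
  have hbase : (2 : ℝ) ^ (1 - ∑ j ∈ S, R j) < 1 :=
    Real.rpow_lt_one_of_one_lt_of_neg one_lt_two (sub_neg.mpr hlt)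
  have hbound : Tendsto (fun n : ℕ => (2 : ℝ) ^ ((n : ℝ) * (1 - ∑ j ∈ S, R j)))
      atTop (nhds 0) := by
    refine (tendsto_pow_atTop_nhds_zero_of_lt_one (by positivity) hbase).congr fun n => ?_
    rw [← Real.rpow_mul_natCast zero_le_two, mul_comm]
  have hone_le : (1 : ℝ) - 0 ≤ 0 := le_of_tendsto_of_tendsto' (tendsto_const_nhds.sub hC) hbound
    fun n => (C n).one_sub_Pe_le hS
  norm_num at hone_le

theorem closure_indexAchievable_subset :
    closure {R | IndexAchievable N A R} ⊆
      {R | (∀ j, 0 ≤ R j) ∧ ∀ S, AcyclicOn A S → ∑ j ∈ S, R j ≤ 1} := by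
  refine closure_minimal (fun R hR => ⟨hR.1, fun S hS => hR.sum_le_one hS⟩) ?_
  simp only [Set.ofPred_and, Set.ofPred_forall]
  exact (isClosed_iInter fun j => isClosed_le (by fun_prop) (by fun_prop)).inter <|
    isClosed_iInter fun S => isClosed_iInter fun _ => isClosed_le (by fun_prop) (by fun_prop)

lemma indexAchievable_of_eventually (hR : ∀ j, 0 ≤ R j)
    (h : ∀ᶠ n in atTop, ∃ C : IndexCode N A R n, C.Pe = 0) : IndexAchievable N A R := by
  have hcode (n : ℕ) : ∃ C : IndexCode N A R n, (∃ C' : IndexCode N A R n, C'.Pe = 0) →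
      C.Pe = 0 := by
    by_cases hn : ∃ C : IndexCode N A R n, C.Pe = 0
    · exact hn.imp fun C hC _ => hC
    · exact ⟨IndexCode.nonempty.some, fun h => absurd h hn⟩
  choose C hC using hcode
  refine ⟨hR, C, tendsto_const_nhds.congr' ?_⟩
  filter_upwards [h] with n hn using (hC n hn).symm

variable {τ : Type*} [Fintype τ] {code : τ → (Fin N → ℕ) × ℕ} {w : τ → ℝ}

theorem indexAchievable_of_timeSharing (hcode : ∀ t, code t ∈ zeroErrorCodes A)
    (hw : ∀ t, 0 ≤ w t) (hR : ∀ j, 0 ≤ R j) (hrate : ∀ j, R j ≤ ∑ t, w t * (code t).1 j)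
    (hlength : ∑ t, w t * (code t).2 < 1) : IndexAchievable N A R := by
  let p (n : ℕ) : (Fin N → ℕ) × ℕ := ∑ t, ⌈w t * n⌉₊ • code t
  have p_mem (n : ℕ) : p n ∈ zeroErrorCodes A := sum_mem fun t _ => nsmul_mem (hcode t) _
  have p_rate (n : ℕ) (j : Fin N) : n * R j ≤ (p n).1 j := by
    calc n * R j ≤ n * ∑ t, w t * (code t).1 j := by gcongr; exact hrate j
      _ = ∑ t, w t * n * (code t).1 j := by
          rw [mul_sum]
          exact sum_congr rfl fun t _ => by ring
      _ ≤ ∑ t, (⌈w t * n⌉₊ : ℝ) * (code t).1 j := by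
          gcongr
          exact Nat.le_ceil _
      _ = (p n).1 j := by simp [p, Prod.fst_sum]
  have p_length : Tendsto (fun n : ℕ => ((p n).2 : ℝ) / n) atTop
      (nhds (∑ t, w t * (code t).2)) := by
    have hceil (t : τ) : Tendsto (fun n : ℕ => (⌈w t * n⌉₊ : ℝ) / n) atTop (nhds (w t)) :=
      (tendsto_nat_ceil_mul_div_atTop (hw t)).comp tendsto_natCast_atTop_atTop
    refine (tendsto_finsetSum univ fun t _ =>
      (hceil t).mul_const ((code t).2 : ℝ)).congr fun n => ?_
    simp [p, Prod.snd_sum, sum_div, div_mul_eq_mul_div]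
  refine indexAchievable_of_eventually hR ?_
  filter_upwards [p_length.eventually_le_const hlength, eventually_gt_atTop 0] with n hn hpos
  rw [div_le_one (Nat.cast_pos.mpr hpos), Nat.cast_le] at hn
  exact IndexCode.exists_Pe_eq_zero_of_mem (p_mem n) (p_rate n) hn

theorem mem_closure_of_timeSharing (hcode : ∀ t, code t ∈ zeroErrorCodes A)
    (hw : ∀ t, 0 ≤ w t) (hR : ∀ j, 0 ≤ R j) (hrate : ∀ j, R j ≤ ∑ t, w t * (code t).1 j)
    (hlength : ∑ t, w t * (code t).2 ≤ 1) : R ∈ closure {R | IndexAchievable N A R} := by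
  have hscaled : Set.MapsTo (fun c : ℝ => c • R) (Set.Ico 0 1) {R | IndexAchievable N A R} := by
    rintro c ⟨hc0, hc1⟩
    refine indexAchievable_of_timeSharing (w := fun t => c * w t) hcode
      (fun t => mul_nonneg hc0 (hw t)) (fun j => mul_nonneg hc0 (hR j)) (fun j => ?_) ?_
    · simp only [Pi.smul_apply, smul_eq_mul, mul_assoc, ← mul_sum]
      gcongr
      exact hrate j
    · simp only [mul_assoc, ← mul_sum]
      exact (mul_le_of_le_one_right hc0 hlength).trans_lt hc1
  have hone : (1 : ℝ) ∈ closure (Set.Ico 0 1) := by simp [closure_Ico]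
  simpa using map_mem_closure (by fun_prop) hone hscaled

end CapacityRegion

section FourMessages

/-- The side information sets of the problem `(1|4), (2|3,4), (3|1,2), (4|2,3)`, with messages
indexed from `0`. -/
abbrev fourMessageSideInfo : Fin 4 → Finset (Fin 4) :=
  ![({3} : Finset (Fin 4)), {2, 3}, {0, 1}, {1, 2}]

/-- Bits per message and length of the four scalar linear codes with transmissions `x₁`, `x₂ + x₃`,
`x₂ + x₄` and `(x₁ + x₄, x₂ + x₃ + x₄)`, whose time sharing gives the whole capacity region. -/
def fourMessageCode : Fin 4 → (Fin 4 → ℕ) × ℕ :=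
  ![(![1, 0, 0, 0], 1), (![0, 1, 1, 0], 1), (![0, 1, 0, 1], 1), (![1, 1, 1, 1], 2)]

lemma fourMessageCode_mem (t : Fin 4) :
    fourMessageCode t ∈ zeroErrorCodes fourMessageSideInfo := by
  fin_cases t
  · exact mem_zeroErrorCodes_of_matrix (fun _ _ => 1) (by decide)
  · exact mem_zeroErrorCodes_of_matrix (fun _ _ => 1) (by decide)
  · exact mem_zeroErrorCodes_of_matrix (fun _ _ => 1) (by decide)
  · exact mem_zeroErrorCodes_of_matrix
      (fun i s => !![1, 0, 0, 1; 0, 1, 1, 1] i s.1) (by decide)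

lemma sum_fourMessageCode_bits (w : Fin 4 → ℝ) (j : Fin 4) :
    ∑ t, w t * (fourMessageCode t).1 j =
      ![w 0 + w 3, w 1 + w 2 + w 3, w 1 + w 3, w 2 + w 3] j := by
  fin_cases j <;> simp [Fin.sum_univ_four, fourMessageCode]

lemma sum_fourMessageCode_length (w : Fin 4 → ℝ) :
    ∑ t, w t * (fourMessageCode t).2 = w 0 + w 1 + w 2 + 2 * w 3 := by
  simp [Fin.sum_univ_four, fourMessageCode, mul_comm]

lemma exists_fourMessageCode_timeSharing {R : Fin 4 → ℝ} (h0 : 0 ≤ R 0) (h2 : 0 ≤ R 2)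
    (h01 : R 0 + R 1 ≤ 1) (h02 : R 0 + R 2 ≤ 1) (h03 : R 0 + R 3 ≤ 1) (h23 : R 2 + R 3 ≤ 1) :
    ∃ w : Fin 4 → ℝ, (∀ t, 0 ≤ w t) ∧ (∀ j, R j ≤ ∑ t, w t * (fourMessageCode t).1 j) ∧
      ∑ t, w t * (fourMessageCode t).2 ≤ 1 := by
  suffices h : ∃ a b c d : ℝ, (0 ≤ a ∧ 0 ≤ b ∧ 0 ≤ c ∧ 0 ≤ d) ∧
      (R 0 ≤ a + d ∧ R 1 ≤ b + c + d ∧ R 2 ≤ b + d ∧ R 3 ≤ c + d) ∧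
        a + b + c + 2 * d ≤ 1 by
    obtain ⟨a, b, c, d, hnonneg, hbits, hlength⟩ := h
    refine ⟨![a, b, c, d], ?_, ?_, ?_⟩
    · simpa [Fin.forall_fin_succ] using hnonneg
    · simpa [sum_fourMessageCode_bits, Fin.forall_fin_succ] using hbits
    · simpa [sum_fourMessageCode_length] using hlength
  rcases le_total 1 (R 0 + R 2 + R 3) with h | h
  -- These weights solve `R 0 = a + d`, `R 2 = b + d`, `R 3 = c + d` and `a + b + c + 2 * d = 1`.
  · exact ⟨1 - R 2 - R 3, 1 - R 0 - R 3, 1 - R 0 - R 2, R 0 + R 2 + R 3 - 1, by grind⟩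
  · exact ⟨R 0, R 2, 1 - R 0 - R 2, 0, by grind⟩

end FourMessages

/-- **Capacity region of the 4-message index coding problem** `(1|4), (2|3,4), (3|1,2),
(4|2,3)` (Example 2, with messages 1,2,3,4 indexed by `0,1,2,3 : Fin 4`): the capacity
region equals the set of nonnegative rate tuples satisfying
`R₁+R₂ ≤ 1`, `R₁+R₃ ≤ 1`, `R₁+R₄ ≤ 1`, `R₃+R₄ ≤ 1`. -/
theorem capacity_region_four_message_example :
    closure {R : Fin 4 → ℝ |
        IndexAchievable 4
          (![({3} : Finset (Fin 4)), {2, 3}, {0, 1}, {1, 2}]) R} =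
      {R : Fin 4 → ℝ | (∀ j, 0 ≤ R j) ∧
        R 0 + R 1 ≤ 1 ∧ R 0 + R 2 ≤ 1 ∧ R 0 + R 3 ≤ 1 ∧ R 2 + R 3 ≤ 1} := by
  refine Set.Subset.antisymm (fun R hR => ?_) fun R ⟨hR, h01, h02, h03, h23⟩ => ?_
  · obtain ⟨hR, hsum⟩ := closure_indexAchievable_subset hR
    refine ⟨hR, ?_, ?_, ?_, ?_⟩
    · simpa using hsum {0, 1} ⟨![0, 0, 0, 0], by decide⟩
    · simpa using hsum {0, 2} ⟨![0, 0, 1, 0], by decide⟩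
    · simpa using hsum {0, 3} ⟨![1, 0, 0, 0], by decide⟩
    · simpa using hsum {2, 3} ⟨![0, 0, 0, 1], by decide⟩
  · obtain ⟨w, hw, hrate, hlength⟩ :=
      exists_fourMessageCode_timeSharing (hR 0) (hR 2) h01 h02 h03 h23
    exact mem_closure_of_timeSharing fourMessageCode_mem hw hR hrate hlength
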